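/- arXiv:math/0506281 — 8 statements merged into one kernel-verified Lean document; each statement's English description precedes it below -/
import Mathlib

section
/- Let G be a finite simple graph on vertex set {v_1,...,v_n} and let R+A denote its edge cone in R^n. If A is an independent set of vertices of G, then every point x of the edge cone satisfies ∑_{v_i ∈ A} x_i ≤ ∑_{v_i ∈ N(A)} x_i; consequently the set F = R+A ∩ H_A is a face of the edge cone (hence either a proper face or equal to R+A). -/
open Finset

/-- The edge vector `e_i + e_j` associated to an edge `{i, j}`. -/
def edgeVector {V : Type*} [DecidableEq V] (i j : V) : V → ℝ :=
  fun k => (if k = i then 1 else 0) + (if k = j then 1 else 0)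

/-- The edge cone of a graph `G`: all nonnegative real linear combinations of the
edge vectors of `G`. -/
def edgeCone {V : Type*} [Fintype V] [DecidableEq V] (G : SimpleGraph V) :
    Set (V → ℝ) :=
  { x | ∃ c : V → V → ℝ, (∀ i j, 0 ≤ c i j) ∧ (∀ i j, ¬ G.Adj i j → c i j = 0) ∧
        x = ∑ i, ∑ j, c i j • edgeVector i j }

/-- The neighbor set `N(A)`: vertices adjacent to at least one vertex of `A`. -/
def nbr {V : Type*} [Fintype V] [DecidableEq V] (G : SimpleGraph V)
    [DecidableRel G.Adj] (A : Finset V) : Finset V :=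
  Finset.univ.filter fun v => ∃ a ∈ A, G.Adj v a

/-- `A` is an independent set of vertices of `G`. -/
def IsIndep {V : Type*} (G : SimpleGraph V) (A : Finset V) : Prop :=
  ∀ a ∈ A, ∀ b ∈ A, ¬ G.Adj a b

/-- `F` is a face of the cone `Q`: `F = Q ∩ {x | ⟪x, a⟫ = 0}` for some `a` with
`Q ⊆ {x | ⟪x, a⟫ ≤ 0}`. -/
def IsFace {V : Type*} [Fintype V] (Q F : Set (V → ℝ)) : Prop :=
  ∃ a : V → ℝ, (∀ x ∈ Q, ∑ i, x i * a i ≤ 0) ∧ F = Q ∩ {x | ∑ i, x i * a i = 0}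

/-- `F` is a facet of the cone `Q`: a face whose linear span has dimension one less
than the dimension of the linear span of `Q`. -/
def IsFacet {V : Type*} [Fintype V] (Q F : Set (V → ℝ)) : Prop :=
  IsFace Q F ∧
    Module.finrank ℝ (Submodule.span ℝ F) = Module.finrank ℝ (Submodule.span ℝ Q) - 1

/-- If `A` is an independent set of vertices of `G`, then every point of the edge cone
satisfies `∑_{v_i ∈ A} x_i ≤ ∑_{v_i ∈ N(A)} x_i`; consequently
`F = ℝ₊𝒜 ∩ H_A` is a face of the edge cone. -/
theorem stmt1 {n : ℕ} (G : SimpleGraph (Fin n)) [DecidableRel G.Adj]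
    (A : Finset (Fin n)) (hA : IsIndep G A) :
    (∀ x ∈ edgeCone G, ∑ i ∈ A, x i ≤ ∑ i ∈ nbr G A, x i) ∧
    IsFace (edgeCone G)
      (edgeCone G ∩ {x : Fin n → ℝ | ∑ i ∈ A, x i = ∑ i ∈ nbr G A, x i}) := by
  have key : ∀ x ∈ edgeCone G, ∑ i ∈ A, x i ≤ ∑ i ∈ nbr G A, x i := by
    rintro x ⟨c, hc, hc0, rfl⟩
    have swap : ∀ S : Finset (Fin n),
        ∑ k ∈ S, (∑ i, ∑ j, c i j • edgeVector i j) k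
          = ∑ i, ∑ j, c i j * ((if i ∈ S then 1 else 0) + (if j ∈ S then 1 else 0)) := by
      intro S
      simp only [Finset.sum_apply, Pi.smul_apply, smul_eq_mul]
      rw [Finset.sum_comm]
      refine Finset.sum_congr rfl fun i _ => ?_
      rw [Finset.sum_comm]
      refine Finset.sum_congr rfl fun j _ => ?_
      rw [← Finset.mul_sum]
      simp [edgeVector, Finset.sum_add_distrib]
    rw [swap, swap]
    refine Finset.sum_le_sum fun i _ => Finset.sum_le_sum fun j _ => ?_
    by_cases h : G.Adj i j
    · refine mul_le_mul_of_nonneg_left ?_ (hc i j)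
      have h1 : i ∈ A → j ∈ nbr G A := fun hi => by
        simp only [nbr, Finset.mem_filter, Finset.mem_univ, true_and]
        exact ⟨i, hi, h.symm⟩
      have h2 : j ∈ A → i ∈ nbr G A := fun hj => by
        simp only [nbr, Finset.mem_filter, Finset.mem_univ, true_and]
        exact ⟨j, hj, h⟩
      have h3 : i ∈ A → j ∈ A → False := fun hi hj => hA i hi j hj h
      split_ifs <;> first | (exfalso; tauto) | norm_num
    · simp [hc0 i j h]
  have lin : ∀ x : Fin n → ℝ,
      ∑ i, x i * ((if i ∈ A then 1 else 0) - (if i ∈ nbr G A then 1 else 0))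
        = ∑ i ∈ A, x i - ∑ i ∈ nbr G A, x i := by
    intro x
    simp [mul_sub, Finset.sum_sub_distrib]
  refine ⟨key, fun i => (if i ∈ A then 1 else 0) - (if i ∈ nbr G A then 1 else 0), ?_, ?_⟩
  · intro x hx
    rw [lin]
    exact sub_nonpos.mpr (key x hx)
  · ext x
    simp only [Set.mem_inter_iff, Set.mem_setOf_eq, lin, sub_eq_zero]
end

section
/- Let G be a connected finite simple graph on vertex set V = {v_1,...,v_n}. Then a vector x = (x_1,...,x_n) ∈ R^n belongs to the edge cone R+A of G if and only if x_i ≥ 0 for i = 1,...,n and ∑_{v_i ∈ A} x_i ≤ ∑_{v_i ∈ N(A)} x_i for every independent set of vertices A of G. -/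
open Finset

theorem edge_pair {n : ℕ} (i j : Fin n) (a : Fin n → ℝ) :
    ∑ k, edgeVector i j k * a k = a i + a j := by
  simp [edgeVector, add_mul, Finset.sum_add_distrib]

/-- Pairing of a combination of edge vectors with a vector `a`. -/
theorem comb_pair {n : ℕ} (c : Fin n → Fin n → ℝ) (a : Fin n → ℝ) :
    ∑ k, (∑ i, ∑ j, c i j • edgeVector i j) k * a k = ∑ i, ∑ j, c i j * (a i + a j) := by
  simp only [Finset.sum_apply, Pi.smul_apply, smul_eq_mul, Finset.sum_mul]
  rw [Finset.sum_comm]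
  refine Finset.sum_congr rfl fun i _ => ?_
  rw [Finset.sum_comm]
  refine Finset.sum_congr rfl fun j _ => ?_
  rw [← edge_pair i j a, Finset.mul_sum]
  exact Finset.sum_congr rfl fun k _ => by ring

theorem cone_pair_nonneg {n : ℕ} (G : SimpleGraph (Fin n)) (x : Fin n → ℝ) (hx : x ∈ edgeCone G)
    (a : Fin n → ℝ) (ha : ∀ i j, G.Adj i j → 0 ≤ a i + a j) : 0 ≤ ∑ k, x k * a k := by
  obtain ⟨c, hc, hc0, rfl⟩ := hx
  rw [comb_pair]
  refine Finset.sum_nonneg fun i _ => Finset.sum_nonneg fun j _ => ?_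
  by_cases h : G.Adj i j
  · exact mul_nonneg (hc i j) (ha i j h)
  · simp [hc0 i j h]

theorem cone_convex {n : ℕ} (G : SimpleGraph (Fin n)) : Convex ℝ (edgeCone G) := by
  rintro _ ⟨c, hc, hc0, rfl⟩ _ ⟨d, hd, hd0, rfl⟩ s t hs ht _
  refine ⟨fun i j => s * c i j + t * d i j, fun i j => ?_, fun i j h => ?_, ?_⟩
  · have := hc i j
    have := hd i j
    positivity
  · simp [hc0 i j h, hd0 i j h]
  · simp only [Finset.smul_sum, add_smul, mul_smul, Finset.sum_add_distrib]

theorem cone_edge {n : ℕ} (G : SimpleGraph (Fin n)) (i j : Fin n) (h : G.Adj i j) (t : ℝ)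
    (ht : 0 ≤ t) : t • edgeVector i j ∈ edgeCone G := by
  refine ⟨fun k l => if k = i ∧ l = j then t else 0, fun k l => ?_, fun k l hkl => ?_, ?_⟩
  · dsimp only
    split_ifs <;> simp [ht]
  · dsimp only
    rw [if_neg]
    rintro ⟨rfl, rfl⟩
    exact hkl h
  · rw [Finset.sum_eq_single i, Finset.sum_eq_single j]
    · simp
    · intro l _ hl
      simp [hl]
    · simp
    · intro k _ hk
      simp [hk]
    · simp

theorem cone_closed {n : ℕ} (G : SimpleGraph (Fin n)) : IsClosed (edgeCone G) := by
  refine isClosed_of_closure_subset fun x hx => ?_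
  set M : ℝ := ∑ k, x k * 1 + 1 with hM
  let S : Set (Fin n → Fin n → ℝ) :=
    (Set.pi Set.univ fun i => Set.pi Set.univ fun j => Set.Icc (0 : ℝ) M) ∩
      ⋂ i, ⋂ j, {c | ¬ G.Adj i j → c i j = 0}
  have hS : IsCompact S := by
    refine IsCompact.inter_right ?_ ?_
    · exact isCompact_univ_pi fun i => isCompact_univ_pi fun j => isCompact_Icc
    · refine isClosed_iInter fun i => isClosed_iInter fun j => ?_
      by_cases h : G.Adj i j
      · simp [h]
      · simp only [h, not_false_eq_true, true_imp_iff]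
        exact isClosed_eq (by fun_prop) (by fun_prop)
  let Φ : (Fin n → Fin n → ℝ) → (Fin n → ℝ) := fun c => ∑ i, ∑ j, c i j • edgeVector i j
  have hΦ : Continuous Φ := by
    refine continuous_finsetSum _ fun i _ => continuous_finsetSum _ fun j _ => ?_
    fun_prop
  have hcl : IsClosed (Φ '' S) := (hS.image hΦ).isClosed
  let U : Set (Fin n → ℝ) := {y | ∑ k, y k * 1 < M}
  have hU : IsOpen U := isOpen_lt (by fun_prop) (by fun_prop)
  have hxU : x ∈ U := by
    change ∑ k, x k * 1 < M
    linarith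
  have hsub : U ∩ edgeCone G ⊆ Φ '' S := by
    rintro y ⟨hyU, c, hc, hc0, rfl⟩
    refine ⟨c, ⟨?_, ?_⟩, rfl⟩
    · intro i _ j _
      refine ⟨hc i j, ?_⟩
      have h1 : ∑ k, (∑ i, ∑ j, c i j • edgeVector i j) k * (1 : ℝ) < M := hyU
      rw [comb_pair c (fun _ => 1)] at h1
      have h2 : c i j * (1 + 1) ≤ ∑ j, c i j * (1 + 1) :=
        Finset.single_le_sum (f := fun j => c i j * ((1 : ℝ) + 1))
          (fun j _ => mul_nonneg (hc i j) (by norm_num)) (Finset.mem_univ j)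
      have h3 : ∑ j, c i j * (1 + 1) ≤ ∑ i, ∑ j, c i j * ((1 : ℝ) + 1) :=
        Finset.single_le_sum (f := fun i => ∑ j, c i j * ((1 : ℝ) + 1))
          (fun i _ => Finset.sum_nonneg fun j _ => mul_nonneg (hc i j) (by norm_num))
          (Finset.mem_univ i)
      have := hc i j
      linarith
    · simp only [Set.mem_iInter]
      exact fun i j => hc0 i j
  have hx2 : x ∈ Φ '' S := hcl.closure_subset_iff.2 hsub (hU.inter_closure ⟨hxU, hx⟩)
  obtain ⟨c, ⟨hc1, hc2⟩, rfl⟩ := hx2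
  refine ⟨c, fun i j => (hc1 i trivial j trivial).1, ?_, rfl⟩
  simp only [Set.mem_iInter] at hc2
  exact fun i j => hc2 i j

/-- Farkas' lemma for the edge cone. -/
theorem cone_farkas {n : ℕ} (G : SimpleGraph (Fin n)) (x : Fin n → ℝ)
    (H : ∀ a : Fin n → ℝ, (∀ i j, G.Adj i j → 0 ≤ a i + a j) → 0 ≤ ∑ k, x k * a k) :
    x ∈ edgeCone G := by
  by_contra hx
  obtain ⟨f, u, hfx, hf⟩ := geometric_hahn_banach_point_closed (cone_convex G) (cone_closed G) hx
  have hrep : ∀ y : Fin n → ℝ, f y = ∑ k, y k * f (Pi.single k 1) := by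
    intro y
    conv_lhs => rw [pi_eq_sum_univ' y]
    simp only [map_sum, map_smul, smul_eq_mul]
  have h0 : u < 0 := by
    have : (0 : Fin n → ℝ) ∈ edgeCone G := ⟨fun _ _ => 0, by simp, by simp, by simp⟩
    simpa using hf 0 this
  have h1 := H (fun k => f (Pi.single k 1)) (by
    intro i j h
    rw [← edge_pair i j (fun k => f (Pi.single k 1)), ← hrep]
    by_contra! hneg
    have := hf _ (cone_edge G i j h (u / f (edgeVector i j)) (div_nonneg_of_nonpos h0.le hneg.le))
    rw [map_smul, smul_eq_mul, div_mul_cancel₀ _ hneg.ne] at this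
    exact lt_irrefl _ this)
  rw [← hrep] at h1
  linarith

theorem dual_nonneg {n : ℕ} (G : SimpleGraph (Fin n)) [DecidableRel G.Adj] (x : Fin n → ℝ)
    (hx : ∀ i, 0 ≤ x i)
    (hA : ∀ A : Finset (Fin n), IsIndep G A → ∑ i ∈ A, x i ≤ ∑ i ∈ nbr G A, x i) (N : ℕ) :
    ∀ a : Fin n → ℝ, (Finset.univ.filter fun i => a i < 0).card = N →
      (∀ i j, G.Adj i j → 0 ≤ a i + a j) → 0 ≤ ∑ k, x k * a k := by
  induction N using Nat.strong_induction_on with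
  | _ N ih =>
  intro a hN ha
  set A := Finset.univ.filter fun i => a i < 0 with hAdef
  have memA : ∀ i, i ∈ A ↔ a i < 0 := by simp [hAdef]
  have memN : ∀ i, i ∈ nbr G A ↔ ∃ b ∈ A, G.Adj i b := by simp [nbr]
  rcases A.eq_empty_or_nonempty with hE | hne
  · refine Finset.sum_nonneg fun k _ => mul_nonneg (hx k) ?_
    by_contra! h
    have := (memA k).2 h
    simp [hE] at this
  obtain ⟨p, hp, hmax⟩ := Finset.exists_max_image A a hne
  have hp0 := (memA p).1 hp
  have hind : IsIndep G A := fun i hi j hj hij => by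
    have := ha i j hij
    have := (memA i).1 hi
    have := (memA j).1 hj
    linarith
  have hNge : ∀ i ∈ nbr G A, - a p ≤ a i := fun i hi => by
    obtain ⟨b, hb, hib⟩ := (memN i).1 hi
    have := ha i b hib
    have := hmax b hb
    linarith
  let a' : Fin n → ℝ := fun i =>
    a i + (if i ∈ A then - a p else 0) - (if i ∈ nbr G A then - a p else 0)
  have hdisj : ∀ i ∈ A, i ∉ nbr G A := fun i hi hi2 => by
    have := hNge i hi2
    have := (memA i).1 hi
    linarith
  have e1 : ∀ i ∈ A, a' i = a i - a p := fun i hi => by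
    simp only [a', if_pos hi, if_neg (hdisj i hi)]; ring
  have e2 : ∀ i ∈ nbr G A, a' i = a i + a p := fun i hi => by
    simp only [a', if_pos hi, if_neg (fun h => hdisj i h hi)]; ring
  have e3 : ∀ i ∉ A, 0 ≤ a' i := fun i hi => by
    by_cases h : i ∈ nbr G A
    · rw [e2 i h]
      linarith [hNge i h]
    · simp only [a', if_neg hi, if_neg h]
      have : ¬ a i < 0 := fun h => hi ((memA i).2 h)
      linarith
  have key := ih (Finset.univ.filter fun i => a' i < 0).card (by
    rw [← hN]
    refine Finset.card_lt_card ?_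
    refine (Finset.ssubset_iff_of_subset ?_).2 ⟨p, hp, ?_⟩
    · intro i hi
      by_contra h
      have := e3 i h
      have h2 : a' i < 0 := by simpa using hi
      linarith
    · simp [e1 p hp]) a' rfl (by
    intro i j hij
    by_cases hi : i ∈ A
    · have hj : j ∈ nbr G A := (memN j).2 ⟨i, hi, hij.symm⟩
      rw [e1 i hi, e2 j hj]
      linarith [ha i j hij]
    by_cases hj : j ∈ A
    · have hi : i ∈ nbr G A := (memN i).2 ⟨j, hj, hij⟩
      rw [e1 j hj, e2 i hi]
      linarith [ha i j hij]
    exact add_nonneg (e3 i hi) (e3 j hj))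
  have hsum : ∑ k, x k * a' k =
      ∑ k, x k * a k + (-a p) * (∑ i ∈ A, x i - ∑ i ∈ nbr G A, x i) := by
    simp only [a', mul_add, mul_sub, Finset.sum_add_distrib, Finset.sum_sub_distrib, mul_ite,
      mul_zero, Finset.sum_ite_mem, Finset.univ_inter, Finset.mul_sum]
    simp only [mul_comm (-a p)]
    ring
  have h4 := hA A hind
  have h5 : (-a p) * (∑ i ∈ A, x i - ∑ i ∈ nbr G A, x i) ≤ 0 :=
    mul_nonpos_of_nonneg_of_nonpos (by linarith) (by linarith)
  linarith

/-- For a connected graph `G`, a vector `x ∈ ℝⁿ` belongs to the edge cone of `G` if and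
only if `x_i ≥ 0` for all `i` and `∑_{v_i ∈ A} x_i ≤ ∑_{v_i ∈ N(A)} x_i` for every
independent set of vertices `A` of `G`. -/
theorem stmt3 {n : ℕ} (G : SimpleGraph (Fin n)) [DecidableRel G.Adj]
    (hG : G.Connected) (x : Fin n → ℝ) :
    x ∈ edgeCone G ↔
      (∀ i, 0 ≤ x i) ∧
      ∀ A : Finset (Fin n), IsIndep G A → ∑ i ∈ A, x i ≤ ∑ i ∈ nbr G A, x i := by
  constructor
  · intro h
    refine ⟨fun i => ?_, fun A hA => ?_⟩
    · have := cone_pair_nonneg G x h (fun k => if k = i then 1 else 0) (by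
        intro p q _
        split_ifs <;> norm_num)
      simpa using this
    · have := cone_pair_nonneg G x h
        (fun k => (if k ∈ nbr G A then 1 else 0) - (if k ∈ A then 1 else 0)) (by
        intro p q hpq
        have h1 : p ∈ A → q ∈ nbr G A := fun hp => by
          simp only [nbr, Finset.mem_filter, Finset.mem_univ, true_and]
          exact ⟨p, hp, hpq.symm⟩
        have h2 : q ∈ A → p ∈ nbr G A := fun hq => by
          simp only [nbr, Finset.mem_filter, Finset.mem_univ, true_and]
          exact ⟨q, hq, hpq⟩
        have h3 : p ∈ A → q ∉ A := fun hp hq => hA p hp q hq hpq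
        by_cases hp : p ∈ A <;> by_cases hq : q ∈ A
        · exact absurd hq (h3 hp)
        · simp only [hp, hq, h1 hp, if_true, if_false]
          split_ifs <;> norm_num
        · simp only [hp, hq, h2 hq, if_true, if_false]
          split_ifs <;> norm_num
        · simp only [hp, hq, if_false]
          split_ifs <;> norm_num)
      simp only [mul_sub, Finset.sum_sub_distrib, mul_ite, mul_one, mul_zero, Finset.sum_ite_mem,
        Finset.univ_inter] at this
      linarith
  · rintro ⟨hx, hA⟩
    exact cone_farkas G x fun a ha => dual_nonneg G x hx hA _ a rfl ha
end

section
/- Let G be a finite simple graph on vertex set V = {v_1,...,v_n} and let F be a facet of the edge cone R+A of G. Then either (a) F = R+A ∩ {x ∈ R^n : x_i = 0} for some 1 ≤ i ≤ n, or (b) F = R+A ∩ H_A for some independent set A of vertices of G. -/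
open Finset

lemma edgeVector_dot {V : Type*} [Fintype V] [DecidableEq V] (b : V → ℝ) (i j : V) :
    ∑ k, edgeVector i j k * b k = b i + b j := by
  simp [edgeVector, add_mul, Finset.sum_add_distrib]

lemma cone_dot {V : Type*} [Fintype V] [DecidableEq V] (b : V → ℝ) (c : V → V → ℝ) :
    ∑ k, (∑ i, ∑ j, c i j • edgeVector i j) k * b k = ∑ i, ∑ j, c i j * (b i + b j) := by
  simp only [Finset.sum_apply, Pi.smul_apply, smul_eq_mul, Finset.sum_mul]
  rw [Finset.sum_comm]
  refine Finset.sum_congr rfl fun i _ => ?_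
  rw [Finset.sum_comm]
  refine Finset.sum_congr rfl fun j _ => ?_
  rw [← edgeVector_dot b i j, Finset.mul_sum]
  refine Finset.sum_congr rfl fun k _ => by ring

lemma edge_mem {V : Type*} [Fintype V] [DecidableEq V] (G : SimpleGraph V) {i j : V}
    (h : G.Adj i j) : edgeVector i j ∈ edgeCone G := by
  refine ⟨fun k l => if k = i then (if l = j then 1 else 0) else 0, ?_, ?_, ?_⟩
  · intro k l
    dsimp only
    split_ifs <;> norm_num
  · intro k l hkl
    dsimp only
    split_ifs with h1 h2
    · subst h1; subst h2; exact absurd h hkl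
    · rfl
    · rfl
  · simp [ite_smul]

/-- The linear functional given by `b`. -/
noncomputable def dotL {V : Type*} [Fintype V] (b : V → ℝ) : (V → ℝ) →ₗ[ℝ] ℝ :=
  ∑ i, b i • LinearMap.proj i

lemma dotL_apply {V : Type*} [Fintype V] (b x : V → ℝ) : dotL b x = ∑ i, x i * b i := by
  simp [dotL, LinearMap.sum_apply, mul_comm]

lemma facet_eq {V : Type*} [Fintype V] [DecidableEq V] (G : SimpleGraph V)
    (F : Set (V → ℝ)) (a b : V → ℝ) (ha : ∀ i j, G.Adj i j → a i + a j ≤ 0)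
    (hFa : F = edgeCone G ∩ {x | ∑ i, x i * a i = 0})
    (hdim : Module.finrank ℝ (Submodule.span ℝ F) =
      Module.finrank ℝ (Submodule.span ℝ (edgeCone G)) - 1)
    (hab : ∀ i j, G.Adj i j → a i + a j = 0 → b i + b j = 0)
    (p q : V) (hpq : G.Adj p q) (hb' : b p + b q ≠ 0) :
    F = edgeCone G ∩ {x | ∑ i, x i * b i = 0} := by
  have hsub : F ⊆ edgeCone G ∩ {x | ∑ i, x i * b i = 0} := by
    rw [hFa]
    rintro x ⟨hx, hxa⟩
    refine ⟨hx, ?_⟩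
    obtain ⟨c, hc, hc', rfl⟩ := hx
    simp only [Set.mem_setOf_eq, cone_dot] at hxa ⊢
    have hle : ∀ i j, c i j * (a i + a j) ≤ 0 := by
      intro i j
      by_cases h : G.Adj i j
      · exact mul_nonpos_of_nonneg_of_nonpos (hc i j) (ha i j h)
      · simp [hc' i j h]
    rw [Finset.sum_eq_zero_iff_of_nonpos
      (fun i _ => Finset.sum_nonpos fun j _ => hle i j)] at hxa
    refine Finset.sum_eq_zero fun i hi => Finset.sum_eq_zero fun j hj => ?_
    have h1 := hxa i hi
    rw [Finset.sum_eq_zero_iff_of_nonpos (fun j _ => hle i j)] at h1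
    have h2 := h1 j hj
    by_cases h : G.Adj i j
    · rcases mul_eq_zero.1 h2 with h3 | h3
      · simp [h3]
      · simp [hab i j h h3]
    · simp [hc' i j h]
  refine Set.Subset.antisymm hsub ?_
  set E := edgeCone G ∩ {x | ∑ i, x i * b i = 0} with hE
  have hker : Submodule.span ℝ E ≤ LinearMap.ker (dotL b) := by
    rw [Submodule.span_le]
    rintro x ⟨_, hx⟩
    simpa [dotL_apply] using hx
  have hlt : Submodule.span ℝ E < Submodule.span ℝ (edgeCone G) := by
    refine lt_of_le_of_ne (Submodule.span_mono Set.inter_subset_left) ?_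
    intro heq
    have h1 : edgeVector p q ∈ Submodule.span ℝ E := by
      rw [heq]; exact Submodule.subset_span (edge_mem G hpq)
    have h2 := hker h1
    rw [LinearMap.mem_ker, dotL_apply, edgeVector_dot] at h2
    exact hb' h2
  have hfr := Submodule.finrank_lt_finrank_of_lt hlt
  have heq : Submodule.span ℝ F = Submodule.span ℝ E :=
    Submodule.eq_of_le_of_finrank_le (Submodule.span_mono hsub) (by omega)
  have hkera : Submodule.span ℝ F ≤ LinearMap.ker (dotL a) := by
    rw [Submodule.span_le, hFa]
    rintro x ⟨_, hx⟩
    simpa [dotL_apply] using hx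
  intro x hx
  have h1 : x ∈ Submodule.span ℝ F := heq ▸ Submodule.subset_span hx
  have h2 := hkera h1
  rw [LinearMap.mem_ker, dotL_apply] at h2
  rw [hFa]
  exact ⟨hx.1, h2⟩

/-- Every facet `F` of the edge cone of `G` is either of the form
`ℝ₊𝒜 ∩ {x | x i = 0}` for some vertex `v_i`, or `ℝ₊𝒜 ∩ H_A` for some independent
set of vertices `A`. -/
theorem stmt5 {n : ℕ} (G : SimpleGraph (Fin n)) [DecidableRel G.Adj]
    (F : Set (Fin n → ℝ)) (hF : IsFacet (edgeCone G) F) :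
    (∃ i : Fin n, F = edgeCone G ∩ {x : Fin n → ℝ | x i = 0}) ∨
    (∃ A : Finset (Fin n), IsIndep G A ∧
      F = edgeCone G ∩ {x : Fin n → ℝ | ∑ i ∈ A, x i = ∑ i ∈ nbr G A, x i}) := by
  obtain ⟨⟨a, haQ, hFa⟩, hdim⟩ := hF
  have ha : ∀ i j, G.Adj i j → a i + a j ≤ 0 := by
    intro i j h
    have := haQ _ (edge_mem G h)
    rwa [edgeVector_dot] at this
  by_cases hall : ∀ i j, G.Adj i j → a i + a j = 0
  · -- then `F` is the whole cone
    right
    refine ⟨∅, by simp [IsIndep], ?_⟩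
    rw [hFa]
    ext x
    simp only [nbr, Set.mem_inter_iff, Set.mem_setOf_eq]
    refine and_congr_right fun hx => ?_
    obtain ⟨c, hc, hc', rfl⟩ := hx
    rw [cone_dot]
    simp only [Finset.notMem_empty, false_and, exists_false, Finset.filter_false,
      Finset.sum_empty, iff_true]
    refine Finset.sum_eq_zero fun i hi => Finset.sum_eq_zero fun j hj => ?_
    by_cases h : G.Adj i j
    · simp [hall i j h]
    · simp [hc' i j h]
  · push Not at hall
    obtain ⟨i, j, hij, hne, hle⟩ : ∃ i j, G.Adj i j ∧ a i + a j ≠ 0 ∧ a i ≤ a j := by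
      obtain ⟨i, j, hij, hne⟩ := hall
      rcases le_total (a i) (a j) with h | h
      · exact ⟨i, j, hij, hne, h⟩
      · exact ⟨j, i, hij.symm, by rwa [add_comm], h⟩
    have hlt : a i + a j < 0 := lt_of_le_of_ne (ha i j hij) hne
    by_cases ht : ∃ k, G.Adj i k ∧ a i + a k = 0
    · right
      obtain ⟨k, hik, hk⟩ := ht
      have hkpos : 0 < a k := by linarith
      set A : Finset (Fin n) := Finset.univ.filter fun v => a k ≤ a v with hA
      have memA : ∀ v, v ∈ A ↔ a k ≤ a v := by simp [hA]
      have memN : ∀ v, v ∈ nbr G A → a v ≤ - a k := by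
        intro v hv
        simp only [nbr, Finset.mem_filter, Finset.mem_univ, true_and] at hv
        obtain ⟨w, hw, hvw⟩ := hv
        have := ha _ _ hvw
        rw [memA] at hw
        linarith
      have memN' : ∀ v w, G.Adj v w → a k ≤ a w → v ∈ nbr G A := by
        intro v w hvw hw
        simp only [nbr, Finset.mem_filter, Finset.mem_univ, true_and]
        exact ⟨w, (memA w).2 hw, hvw⟩
      refine ⟨A, ?_, ?_⟩
      · intro v hv w hw hvw
        rw [memA] at hv hw
        have := ha _ _ hvw
        linarith
      · have key := facet_eq G F a
          (fun v => (if v ∈ A then 1 else 0) - (if v ∈ nbr G A then 1 else 0)) ha hFa hdim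
          ?_ i j hij ?_
        · rw [key]
          ext x
          simp [mul_sub, Finset.sum_sub_distrib, sub_eq_zero]
        · intro v w hvw hz
          have h1 := memN v
          have h2 := memN w
          have h3 := memN' v w hvw
          have h4 := memN' w v hvw.symm
          simp only [memA]
          by_cases c1 : a k ≤ a v
          · have e1 : w ∈ nbr G A := h4 c1
            have e2 : v ∉ nbr G A := fun h => by linarith [h1 h]
            have e3 : ¬ a k ≤ a w := by intro h; linarith
            simp [c1, e1, e2, e3]
          · by_cases c2 : a k ≤ a w
            · have e1 : v ∈ nbr G A := h3 c2
              have e2 : w ∉ nbr G A := fun h => by linarith [h2 h]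
              simp [c1, c2, e1, e2]
            · have e1 : v ∉ nbr G A := fun h => c2 (by linarith [h1 h])
              have e2 : w ∉ nbr G A := fun h => c1 (by linarith [h2 h])
              simp [c1, c2, e1, e2]
        · have e1 : i ∈ nbr G A := memN' i k hik le_rfl
          have e2 : ¬ a k ≤ a i := by intro h; linarith
          have e3 : ¬ a k ≤ a j := by intro h; linarith
          simp only [memA, e1, e2, e3, if_true, if_false]
          split_ifs <;> norm_num
    · left
      push Not at ht
      refine ⟨i, ?_⟩
      have key := facet_eq G F a (fun v => if v = i then 1 else 0) ha hFa hdim ?_ i j hij ?_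
      · rw [key]
        ext x
        simp
      · intro v w hvw hz
        have e1 : v ≠ i := by
          rintro rfl; exact ht _ hvw hz
        have e2 : w ≠ i := by
          rintro rfl; exact ht _ hvw.symm (by rwa [add_comm])
        simp [e1, e2]
      · have := hij.ne'
        simp [this]
end

section
/- Let G be a connected bipartite finite simple graph on vertex set V = {v_1,...,v_n} with n ≥ 2 and bipartition (V_1, V_2). Then the linear span of the edge cone R+A of G (equivalently, the affine hull of R+A) is exactly the hyperplane {x ∈ R^n : ∑_{v_i ∈ V_1} x_i = ∑_{v_i ∈ V_2} x_i}; in particular the edge cone has dimension n - 1. -/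
open Finset

theorem edgeVector_mem_edgeCone {V : Type*} [Fintype V] [DecidableEq V] (G : SimpleGraph V)
    {a b : V} (h : G.Adj a b) : edgeVector a b ∈ edgeCone G := by
  classical
  refine ⟨fun i j => if i = a then (if j = b then 1 else 0) else 0, ?_, ?_, ?_⟩
  · intro i j
    dsimp only
    split_ifs <;> norm_num
  · intro i j hij
    dsimp only
    split_ifs with h1 h2
    · subst h1 h2
      exact absurd h hij
    · rfl
    · rfl
  · rw [Finset.sum_eq_single a]
    · rw [Finset.sum_eq_single b]
      · simp
      · intro j _ hj
        simp [hj]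
      · simp
    · intro i _ hi
      simp [hi]
    · simp

theorem edgeVector_eq_single {V : Type*} [DecidableEq V] (a b : V) :
    edgeVector a b = Pi.single a (1 : ℝ) + Pi.single b (1 : ℝ) := by
  ext k
  simp [edgeVector, Pi.single_apply]

/-- For a connected bipartite graph `G` on `n ≥ 2` vertices with bipartition `(V₁, V₂)`,
the linear span of the edge cone is exactly the hyperplane
`∑_{v_i ∈ V₁} x_i = ∑_{v_i ∈ V₂} x_i`; in particular the edge cone has dimension
`n - 1`. -/
theorem stmt6 {n : ℕ} (G : SimpleGraph (Fin n)) (hn : 2 ≤ n) (hG : G.Connected)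
    (V₁ V₂ : Finset (Fin n)) (hdisj : Disjoint V₁ V₂)
    (hunion : V₁ ∪ V₂ = Finset.univ)
    (hbip : ∀ i j, G.Adj i j → (i ∈ V₁ ∧ j ∈ V₂) ∨ (i ∈ V₂ ∧ j ∈ V₁)) :
    (Submodule.span ℝ (edgeCone G) : Set (Fin n → ℝ)) =
      {x : Fin n → ℝ | ∑ i ∈ V₁, x i = ∑ i ∈ V₂, x i} ∧
    Module.finrank ℝ (Submodule.span ℝ (edgeCone G)) = n - 1 := by
  classical
  set s : Fin n → ℝ := fun i => if i ∈ V₁ then 1 else -1 with hs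
  have hss : ∀ i, s i * s i = 1 := by
    intro i
    simp only [hs]
    split_ifs <;> norm_num
  have hadj : ∀ i j, G.Adj i j → s i = - s j := by
    intro i j hij
    rcases hbip i j hij with ⟨h1, h2⟩ | ⟨h1, h2⟩
    · have := Finset.disjoint_right.mp hdisj h2
      simp [hs, h1, this]
    · have := Finset.disjoint_right.mp hdisj h1
      simp [hs, h2, this]
  let φ : (Fin n → ℝ) →ₗ[ℝ] ℝ := ∑ i, s i • LinearMap.proj i
  have hφ : ∀ x, φ x = ∑ i, s i * x i := by
    intro x
    simp [φ]
  have hφ2 : ∀ x : Fin n → ℝ, φ x = ∑ i ∈ V₁, x i - ∑ i ∈ V₂, x i := by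
    intro x
    rw [hφ, ← hunion, Finset.sum_union hdisj, sub_eq_add_neg, ← Finset.sum_neg_distrib]
    congr 1
    · refine Finset.sum_congr rfl fun i hi => ?_
      simp [hs, hi]
    · refine Finset.sum_congr rfl fun i hi => ?_
      simp [hs, Finset.disjoint_right.mp hdisj hi]
  have hφs : ∀ i, φ (Pi.single i 1) = s i := by
    intro i
    rw [hφ]
    simp [Pi.single_apply]
  have hr : 0 < n := by omega
  let r : Fin n := ⟨0, hr⟩
  have hle : Submodule.span ℝ (edgeCone G) ≤ LinearMap.ker φ := by
    rw [Submodule.span_le]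
    rintro x ⟨c, -, hc, rfl⟩
    rw [SetLike.mem_coe]
    refine Submodule.sum_mem _ fun i _ => Submodule.sum_mem _ fun j _ => ?_
    by_cases hij : G.Adj i j
    · refine Submodule.smul_mem _ _ ?_
      rw [LinearMap.mem_ker, edgeVector_eq_single, map_add, hφs, hφs, hadj i j hij]
      ring
    · rw [hc i j hij, zero_smul]
      exact Submodule.zero_mem _
  have hwalk : ∀ i j, G.Walk i j → (Pi.single i (1 : ℝ) - (s i * s j) • Pi.single j (1 : ℝ) :
      Fin n → ℝ) ∈ Submodule.span ℝ (edgeCone G) := by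
    intro i j w
    induction w with
    | nil => simp [hss]
    | @cons u v w h p ih =>
      have h1 := Submodule.subset_span (R := ℝ) (edgeVector_mem_edgeCone G h)
      have h2 := Submodule.sub_mem _ h1 ih
      rw [edgeVector_eq_single] at h2
      convert h2 using 1
      rw [hadj u v h, neg_mul, neg_smul]
      abel
  have hge : LinearMap.ker φ ≤ Submodule.span ℝ (edgeCone G) := by
    intro x hx
    rw [LinearMap.mem_ker, hφ] at hx
    have key : x = ∑ i, x i • (Pi.single i (1 : ℝ) - (s i * s r) • Pi.single r (1 : ℝ) :
        Fin n → ℝ) := by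
      simp only [smul_sub, Finset.sum_sub_distrib, smul_smul]
      rw [← Finset.sum_smul]
      have h0 : ∑ i, x i * (s i * s r) = 0 := by
        have : ∑ i, x i * (s i * s r) = (∑ i, s i * x i) * s r := by
          rw [Finset.sum_mul]
          exact Finset.sum_congr rfl fun i _ => by ring
        rw [this, hx, zero_mul]
      rw [h0, zero_smul, sub_zero]
      ext k
      simp [Finset.sum_apply, Pi.single_apply]
    rw [key]
    refine Submodule.sum_mem _ fun i _ => Submodule.smul_mem _ _ ?_
    exact hwalk i r (hG.preconnected i r).some
  have heq : Submodule.span ℝ (edgeCone G) = LinearMap.ker φ := le_antisymm hle hge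
  refine ⟨?_, ?_⟩
  · rw [heq]
    ext x
    rw [SetLike.mem_coe, LinearMap.mem_ker, hφ2, sub_eq_zero]
    rfl
  · rw [heq]
    have hne : φ ≠ 0 := by
      intro h
      have h1 := hφs r
      have h2 := hss r
      rw [← h1, h] at h2
      simp at h2
    have := Module.Dual.finrank_ker_add_one_of_ne_zero hne
    rw [Module.finrank_fin_fun] at this
    omega
end

section
/- Let G be a connected bipartite finite simple graph on vertex set V = {v_1,...,v_n} with bipartition (V_1, V_2), and let A be an independent set of vertices such that A ∩ V_1 ≠ ∅ and A ∩ V_2 ≠ ∅ and such that H_A ∩ R+A is a facet of the edge cone. Then, setting A_1 = A ∩ V_1 and A_2 = A ∩ V_2, both H_{A_1} ∩ R+A and H_{A_2} ∩ R+A are facets of the edge cone, and H_{A_1}^- ∩ H_{A_2}^- ⊆ H_A^-; consequently the halfspace H_A^- is redundant in the halfspace representation of the edge cone. -/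
open Finset

lemma sum_edgeVector {V : Type*} [DecidableEq V] (S : Finset V) (i j : V) :
    ∑ k ∈ S, edgeVector i j k = (if i ∈ S then (1:ℝ) else 0) + (if j ∈ S then 1 else 0) := by
  simp [edgeVector, Finset.sum_add_distrib]

lemma sum_cone {V : Type*} [Fintype V] [DecidableEq V] (S : Finset V) (c : V → V → ℝ) :
    ∑ k ∈ S, (∑ i, ∑ j, c i j • edgeVector i j) k
      = ∑ i, ∑ j, c i j * ((if i ∈ S then (1:ℝ) else 0) + (if j ∈ S then 1 else 0)) := by
  simp only [Finset.sum_apply, Pi.smul_apply, smul_eq_mul]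
  rw [Finset.sum_comm]
  refine Finset.sum_congr rfl fun i _ => ?_
  rw [Finset.sum_comm]
  refine Finset.sum_congr rfl fun j _ => ?_
  rw [← Finset.mul_sum, sum_edgeVector]

lemma cone_le {V : Type*} [Fintype V] [DecidableEq V] (G : SimpleGraph V)
    [DecidableRel G.Adj] (B : Finset V) (x : V → ℝ) (hx : x ∈ edgeCone G) :
    ∑ i ∈ B, x i ≤ ∑ i ∈ nbr G B, x i := by
  obtain ⟨c, hc, hc0, rfl⟩ := hx
  rw [sum_cone, sum_cone]
  refine Finset.sum_le_sum fun i _ => Finset.sum_le_sum fun j _ => ?_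
  by_cases h : G.Adj i j
  · refine mul_le_mul_of_nonneg_left ?_ (hc i j)
    have a1 : i ∈ B → j ∈ nbr G B := fun hi => by
      simp only [nbr, Finset.mem_filter, Finset.mem_univ, true_and]
      exact ⟨i, hi, h.symm⟩
    have a2 : j ∈ B → i ∈ nbr G B := fun hi => by
      simp only [nbr, Finset.mem_filter, Finset.mem_univ, true_and]
      exact ⟨j, hi, h⟩
    rw [add_comm]
    refine add_le_add ?_ ?_ <;> split_ifs <;> first | tauto | norm_num
  · simp [hc0 i j h]

lemma edgeVector_mem {V : Type*} [Fintype V] [DecidableEq V] (G : SimpleGraph V)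
    (u v : V) (h : G.Adj u v) : edgeVector u v ∈ edgeCone G := by
  refine ⟨fun i j => if i = u ∧ j = v then 1 else 0, ?_, ?_, ?_⟩
  · intro i j
    dsimp only
    split_ifs <;> norm_num
  · intro i j hij
    dsimp only
    rw [if_neg]
    rintro ⟨rfl, rfl⟩
    exact hij h
  · rw [Finset.sum_eq_single u, Finset.sum_eq_single v]
    · simp
    · intro b _ hb; simp [hb]
    · simp
    · intro b _ hb; simp [hb]
    · simp

lemma facet_aux {V : Type*} [Fintype V] [DecidableEq V] (G : SimpleGraph V)
    [DecidableRel G.Adj] (hG : G.Connected) (B : Finset V) (hB : B.Nonempty)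
    (c : V) (hc : c ∉ B) (hc' : c ∉ nbr G B) (F : Set (V → ℝ))
    (hF : F ⊆ {x : V → ℝ | ∑ i ∈ B, x i = ∑ i ∈ nbr G B, x i} ∩ edgeCone G)
    (hfin : Module.finrank ℝ (Submodule.span ℝ F) =
      Module.finrank ℝ (Submodule.span ℝ (edgeCone G)) - 1) :
    IsFacet (edgeCone G)
      ({x : V → ℝ | ∑ i ∈ B, x i = ∑ i ∈ nbr G B, x i} ∩ edgeCone G) := by
  have key : ∀ x : V → ℝ, ∑ i, x i * ((if i ∈ B then (1:ℝ) else 0) -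
      (if i ∈ nbr G B then 1 else 0)) = ∑ i ∈ B, x i - ∑ i ∈ nbr G B, x i := by
    intro x
    simp [mul_sub, Finset.sum_sub_distrib]
  refine ⟨⟨fun i => (if i ∈ B then (1:ℝ) else 0) - (if i ∈ nbr G B then 1 else 0), ?_, ?_⟩, ?_⟩
  · intro x hx
    rw [key]
    linarith [cone_le G B x hx]
  · ext x
    simp only [Set.mem_inter_iff, Set.mem_ofPred_eq, key, sub_eq_zero]
    tauto
  · have hle := Submodule.finrank_mono (Submodule.span_mono (R := ℝ) hF)
    let K : Submodule ℝ (V → ℝ) :=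
      { carrier := {x | ∑ i ∈ B, x i = ∑ i ∈ nbr G B, x i}
        zero_mem' := by simp
        add_mem' := by
          intro a b ha hb
          simp only [Set.mem_ofPred_eq, Pi.add_apply, Finset.sum_add_distrib] at *
          rw [ha, hb]
        smul_mem' := by
          intro r a ha
          simp only [Set.mem_ofPred_eq, Pi.smul_apply, smul_eq_mul, ← Finset.mul_sum] at *
          rw [ha] }
    have hlt : Submodule.span ℝ
        ({x : V → ℝ | ∑ i ∈ B, x i = ∑ i ∈ nbr G B, x i} ∩ edgeCone G) <
        Submodule.span ℝ (edgeCone G) := by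
      refine lt_of_le_of_ne (Submodule.span_mono Set.inter_subset_right) ?_
      intro heq
      have hsub : edgeCone G ⊆ K := by
        intro x hx
        have h1 : x ∈ Submodule.span ℝ (edgeCone G) := Submodule.subset_span hx
        rw [← heq] at h1
        exact (Submodule.span_le (p := K)).2 (fun y hy => hy.1) h1
      have step : ∀ u v, G.Adj u v → (u ∈ B ∨ u ∈ nbr G B) → (v ∈ B ∨ v ∈ nbr G B) := by
        intro u v huv hu
        have h1 : ∑ i ∈ B, edgeVector u v i = ∑ i ∈ nbr G B, edgeVector u v i :=
          hsub (edgeVector_mem G u v huv)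
        rw [sum_edgeVector, sum_edgeVector] at h1
        by_cases huB : u ∈ B
        · right
          simp only [nbr, Finset.mem_filter, Finset.mem_univ, true_and]
          exact ⟨u, huB, huv.symm⟩
        · by_contra hv
          push Not at hv
          have huN : u ∈ nbr G B := by tauto
          simp [huB, hv.1, hv.2, huN] at h1
      obtain ⟨b, hb⟩ := hB
      obtain ⟨w⟩ := hG.preconnected b c
      have walk : ∀ u v (p : G.Walk u v), (u ∈ B ∨ u ∈ nbr G B) → (v ∈ B ∨ v ∈ nbr G B) := by
        intro u v p
        induction p with
        | nil => exact id
        | cons h _ ih => exact fun hu => ih (step _ _ h hu)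
      have := walk b c w (Or.inl hb)
      tauto
    have := Submodule.finrank_lt_finrank_of_lt hlt
    omega

/-- For a connected bipartite graph `G` with bipartition `(V₁, V₂)` and an independent
set `A` meeting both `V₁` and `V₂` such that `H_A ∩ ℝ₊𝒜` is a facet, setting
`A₁ = A ∩ V₁` and `A₂ = A ∩ V₂`, both `H_{A₁} ∩ ℝ₊𝒜` and `H_{A₂} ∩ ℝ₊𝒜` are facets
and `H_{A₁}⁻ ∩ H_{A₂}⁻ ⊆ H_A⁻`, so the halfspace `H_A⁻` is redundant. -/
theorem stmt8 {n : ℕ} (G : SimpleGraph (Fin n)) [DecidableRel G.Adj]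
    (hG : G.Connected)
    (V₁ V₂ : Finset (Fin n)) (hdisj : Disjoint V₁ V₂)
    (hunion : V₁ ∪ V₂ = Finset.univ)
    (hbip : ∀ i j, G.Adj i j → (i ∈ V₁ ∧ j ∈ V₂) ∨ (i ∈ V₂ ∧ j ∈ V₁))
    (A : Finset (Fin n)) (hA : IsIndep G A)
    (h1 : (A ∩ V₁).Nonempty) (h2 : (A ∩ V₂).Nonempty)
    (hfacet : IsFacet (edgeCone G)
      ({x : Fin n → ℝ | ∑ i ∈ A, x i = ∑ i ∈ nbr G A, x i} ∩ edgeCone G)) :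
    IsFacet (edgeCone G)
      ({x : Fin n → ℝ | ∑ i ∈ A ∩ V₁, x i = ∑ i ∈ nbr G (A ∩ V₁), x i} ∩ edgeCone G) ∧
    IsFacet (edgeCone G)
      ({x : Fin n → ℝ | ∑ i ∈ A ∩ V₂, x i = ∑ i ∈ nbr G (A ∩ V₂), x i} ∩ edgeCone G) ∧
    {x : Fin n → ℝ | ∑ i ∈ A ∩ V₁, x i ≤ ∑ i ∈ nbr G (A ∩ V₁), x i} ∩
        {x : Fin n → ℝ | ∑ i ∈ A ∩ V₂, x i ≤ ∑ i ∈ nbr G (A ∩ V₂), x i} ⊆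
      {x : Fin n → ℝ | ∑ i ∈ A, x i ≤ ∑ i ∈ nbr G A, x i} := by
  have hd : ∀ v, v ∈ V₁ → v ∈ V₂ → False := fun v h h' => Finset.disjoint_left.1 hdisj h h'
  have hu : ∀ v, v ∈ V₁ ∨ v ∈ V₂ := fun v => by
    rw [← Finset.mem_union, hunion]; exact Finset.mem_univ v
  have mem_nbr : ∀ (S : Finset (Fin n)) v, v ∈ nbr G S ↔ ∃ a ∈ S, G.Adj v a := by
    intro S v
    simp [nbr]
  have sA : ∀ x : Fin n → ℝ, ∑ i ∈ A, x i = ∑ i ∈ A ∩ V₁, x i + ∑ i ∈ A ∩ V₂, x i := by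
    intro x
    rw [← Finset.sum_union, ← Finset.inter_union_distrib_left, hunion, Finset.inter_univ]
    exact hdisj.mono Finset.inter_subset_right Finset.inter_subset_right
  have sN : ∀ x : Fin n → ℝ, ∑ i ∈ nbr G A, x i =
      ∑ i ∈ nbr G (A ∩ V₁), x i + ∑ i ∈ nbr G (A ∩ V₂), x i := by
    intro x
    rw [← Finset.sum_union]
    · congr 1
      ext v
      simp only [Finset.mem_union, mem_nbr, Finset.mem_inter]
      constructor
      · rintro ⟨a, ha, hv⟩
        rcases hu a with h | h
        · exact Or.inl ⟨a, ⟨ha, h⟩, hv⟩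
        · exact Or.inr ⟨a, ⟨ha, h⟩, hv⟩
      · rintro (⟨a, ha, hv⟩ | ⟨a, ha, hv⟩) <;> exact ⟨a, ha.1, hv⟩
    · rw [Finset.disjoint_left]
      intro v hv hv'
      simp only [mem_nbr, Finset.mem_inter] at hv hv'
      obtain ⟨a, ⟨_, ha⟩, hva⟩ := hv
      obtain ⟨b, ⟨_, hb⟩, hvb⟩ := hv'
      have e1 := hbip _ _ hva
      have e2 := hbip _ _ hvb
      have := hd a
      have := hd b
      have := hd v
      tauto
  obtain ⟨a₁, ha₁⟩ := h1
  obtain ⟨a₂, ha₂⟩ := h2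
  have m₁ := Finset.mem_inter.1 ha₁
  have m₂ := Finset.mem_inter.1 ha₂
  have nn : ∀ a ∈ A, ∀ S, a ∉ nbr G (A ∩ S) := by
    intro a ha S h
    obtain ⟨b, hb, hab⟩ := (mem_nbr _ _).1 h
    exact hA a ha b (Finset.mem_inter.1 hb).1 hab
  refine ⟨?_, ?_, ?_⟩
  · refine facet_aux G hG _ ⟨a₁, ha₁⟩ a₂ ?_ (nn a₂ m₂.1 V₁) _ ?_ hfacet.2
    · intro h
      exact hd a₂ (Finset.mem_inter.1 h).2 m₂.2
    · rintro x ⟨hx, hxc⟩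
      refine ⟨?_, hxc⟩
      have e1 := cone_le G (A ∩ V₁) x hxc
      have e2 := cone_le G (A ∩ V₂) x hxc
      simp only [Set.mem_ofPred_eq] at hx ⊢
      rw [sA, sN] at hx
      linarith
  · refine facet_aux G hG _ ⟨a₂, ha₂⟩ a₁ ?_ (nn a₁ m₁.1 V₂) _ ?_ hfacet.2
    · intro h
      exact hd a₁ m₁.2 (Finset.mem_inter.1 h).2
    · rintro x ⟨hx, hxc⟩
      refine ⟨?_, hxc⟩
      have e1 := cone_le G (A ∩ V₁) x hxc
      have e2 := cone_le G (A ∩ V₂) x hxc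
      simp only [Set.mem_ofPred_eq] at hx ⊢
      rw [sA, sN] at hx
      linarith
  · rintro x ⟨hx, hx'⟩
    simp only [Set.mem_ofPred_eq] at hx hx' ⊢
    rw [sA, sN]
    linarith
end

section
/- Let G be a connected bipartite finite simple graph on vertex set V = {v_1,...,v_n} with bipartition (V_1, V_2), let A be a proper subset of V_1, and suppose F = H_A ∩ R+A is a facet of the edge cone. If N(A) = V_2, then A = V_1 \ {v_i} for some vertex v_i ∈ V_1, and F = R+A ∩ {x ∈ R^n : x_i = 0}. -/
open Finset

lemma cone_nonneg {n : ℕ} (G : SimpleGraph (Fin n)) {x : Fin n → ℝ} (hx : x ∈ edgeCone G)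
    (k : Fin n) : 0 ≤ x k := by
  obtain ⟨c, hc, -, rfl⟩ := hx
  simp only [Finset.sum_apply, Pi.smul_apply, smul_eq_mul]
  refine Finset.sum_nonneg fun i _ => Finset.sum_nonneg fun j _ => mul_nonneg (hc i j) ?_
  unfold edgeVector
  split_ifs <;> norm_num

lemma edge_mem_s9 {n : ℕ} (G : SimpleGraph (Fin n)) {a b : Fin n} (h : G.Adj a b) :
    edgeVector a b ∈ edgeCone G := by
  refine ⟨fun i j => if i = a then (if j = b then 1 else 0) else 0, ?_, ?_, ?_⟩
  · intro i j
    dsimp only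
    split_ifs <;> norm_num
  · intro i j hij
    dsimp only
    split_ifs with h1 h2
    · subst h1 h2; exact absurd h hij
    · rfl
    · rfl
  · rw [Finset.sum_eq_single a, Finset.sum_eq_single b]
    · simp
    · intro j _ hj; simp [hj]
    · simp
    · intro i _ hi; simp [hi]
    · simp

lemma sum_edge {n : ℕ} (S : Finset (Fin n)) (i j : Fin n) :
    ∑ k ∈ S, edgeVector i j k = (if i ∈ S then (1 : ℝ) else 0) + (if j ∈ S then 1 else 0) := by
  simp [edgeVector, Finset.sum_add_distrib]

lemma cone_balance {n : ℕ} (G : SimpleGraph (Fin n))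
    (V₁ V₂ : Finset (Fin n)) (hdisj : Disjoint V₁ V₂)
    (hbip : ∀ i j, G.Adj i j → (i ∈ V₁ ∧ j ∈ V₂) ∨ (i ∈ V₂ ∧ j ∈ V₁))
    {x : Fin n → ℝ} (hx : x ∈ edgeCone G) : ∑ k ∈ V₁, x k = ∑ k ∈ V₂, x k := by
  obtain ⟨c, -, h0, rfl⟩ := hx
  have key : ∀ S : Finset (Fin n),
      ∑ k ∈ S, (∑ i, ∑ j, c i j • edgeVector i j) k
        = ∑ i, ∑ j, c i j * ∑ k ∈ S, edgeVector i j k := by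
    intro S
    simp only [Finset.sum_apply, Pi.smul_apply, smul_eq_mul]
    rw [Finset.sum_comm]
    refine Finset.sum_congr rfl fun i _ => ?_
    rw [Finset.sum_comm]
    refine Finset.sum_congr rfl fun j _ => ?_
    rw [Finset.mul_sum]
  rw [key, key]
  refine Finset.sum_congr rfl fun i _ => Finset.sum_congr rfl fun j _ => ?_
  by_cases hij : G.Adj i j
  · rw [sum_edge, sum_edge]
    rw [Finset.disjoint_left] at hdisj
    rcases hbip i j hij with ⟨h1, h2⟩ | ⟨h1, h2⟩
    · have h3 := hdisj h1
      have h4 : j ∉ V₁ := fun h => hdisj h h2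
      simp [h1, h2, h3, h4]
    · have h3 := hdisj h2
      have h4 : i ∉ V₁ := fun h => hdisj h h1
      simp [h1, h2, h3, h4]
  · simp [h0 i j hij]

/-- For a connected bipartite graph `G` with bipartition `(V₁, V₂)`, a proper subset
`A ⊊ V₁` with `F = H_A ∩ ℝ₊𝒜` a facet and `N(A) = V₂`: then `A = V₁ \ {v}` for some
`v ∈ V₁` and `F = ℝ₊𝒜 ∩ {x | x_v = 0}`. -/
theorem stmt9 {n : ℕ} (G : SimpleGraph (Fin n)) [DecidableRel G.Adj]
    (hG : G.Connected)
    (V₁ V₂ : Finset (Fin n)) (hdisj : Disjoint V₁ V₂)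
    (hunion : V₁ ∪ V₂ = Finset.univ)
    (hbip : ∀ i j, G.Adj i j → (i ∈ V₁ ∧ j ∈ V₂) ∨ (i ∈ V₂ ∧ j ∈ V₁))
    (A : Finset (Fin n)) (hAsub : A ⊆ V₁) (hAne : A ≠ V₁)
    (hfacet : IsFacet (edgeCone G)
      ({x : Fin n → ℝ | ∑ i ∈ A, x i = ∑ i ∈ nbr G A, x i} ∩ edgeCone G))
    (hNA : nbr G A = V₂) :
    ∃ v ∈ V₁, A = V₁.erase v ∧
      {x : Fin n → ℝ | ∑ i ∈ A, x i = ∑ i ∈ nbr G A, x i} ∩ edgeCone G =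
        edgeCone G ∩ {x : Fin n → ℝ | x v = 0} := by
  classical
  have hchar : ∀ x ∈ edgeCone G,
      (∑ i ∈ A, x i = ∑ i ∈ nbr G A, x i ↔ ∀ i ∈ V₁ \ A, x i = 0) := by
    intro x hx
    rw [hNA, ← cone_balance G V₁ V₂ hdisj hbip hx, ← Finset.sum_sdiff hAsub,
      ← Finset.sum_eq_zero_iff_of_nonneg (fun i _ => cone_nonneg G hx i)]
    constructor <;> intro h <;> linarith
  obtain ⟨v, hv1, hvA⟩ : ∃ v ∈ V₁, v ∉ A := by
    by_contra! h
    exact hAne (Finset.Subset.antisymm hAsub h)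
  have huniq : ∀ w ∈ V₁, w ∉ A → w = v := by
    intro w hw1 hwA
    by_contra hwv
    have hnt : Nontrivial (Fin n) := ⟨w, v, hwv⟩
    obtain ⟨a, ha⟩ := hG.preconnected.exists_adj_of_nontrivial v
    obtain ⟨b, hb⟩ := hG.preconnected.exists_adj_of_nontrivial w
    have hwa : w ≠ a := by
      rintro rfl
      rw [Finset.disjoint_left] at hdisj
      rcases hbip _ _ ha with ⟨h1, h2⟩ | ⟨h1, h2⟩
      · exact hdisj hw1 h2
      · exact hdisj hv1 h1
    set F := {x : Fin n → ℝ | ∑ i ∈ A, x i = ∑ i ∈ nbr G A, x i} ∩ edgeCone G with hF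
    have hker : ∀ u ∈ V₁, u ∉ A →
        Submodule.span ℝ F ≤ LinearMap.ker (LinearMap.proj u : (Fin n → ℝ) →ₗ[ℝ] ℝ) := by
      intro u hu1 huA
      rw [Submodule.span_le]
      rintro x ⟨hxA, hx⟩
      exact (hchar x hx).1 hxA u (Finset.mem_sdiff.2 ⟨hu1, huA⟩)
    have hFQ : Submodule.span ℝ F ≤ Submodule.span ℝ (edgeCone G) :=
      Submodule.span_mono Set.inter_subset_right
    have hav := Submodule.subset_span (R := ℝ) (edge_mem_s9 G ha)
    have hbw := Submodule.subset_span (R := ℝ) (edge_mem_s9 G hb)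
    have hlt1 : Submodule.span ℝ F <
        Submodule.span ℝ F ⊔ Submodule.span ℝ {edgeVector v a} := by
      refine lt_of_le_of_ne le_sup_left fun h => ?_
      have h1 : edgeVector v a ∈ Submodule.span ℝ F := by
        rw [h]
        exact Submodule.mem_sup_right (Submodule.mem_span_singleton_self _)
      have h2 := hker v hv1 hvA h1
      simp [edgeVector, ha.ne] at h2
    have hlt2 : Submodule.span ℝ F ⊔ Submodule.span ℝ {edgeVector v a} <
        Submodule.span ℝ (edgeCone G) := by
      refine lt_of_le_of_ne (sup_le hFQ ?_) fun h => ?_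
      · rw [Submodule.span_singleton_le_iff_mem]
        exact hav
      · have hle : Submodule.span ℝ F ⊔ Submodule.span ℝ {edgeVector v a} ≤
            LinearMap.ker (LinearMap.proj w : (Fin n → ℝ) →ₗ[ℝ] ℝ) := by
          refine sup_le (hker w hw1 hwA) ?_
          rw [Submodule.span_singleton_le_iff_mem]
          simp [edgeVector, hwv, hwa]
        rw [h] at hle
        have h2 := hle hbw
        simp [edgeVector, hb.ne] at h2
    have d1 := Submodule.finrank_lt_finrank_of_lt hlt1
    have d2 := Submodule.finrank_lt_finrank_of_lt hlt2
    have d3 := hfacet.2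
    omega
  refine ⟨v, hv1, ?_, ?_⟩
  · ext u
    rw [Finset.mem_erase]
    constructor
    · intro hu
      exact ⟨fun h => hvA (h ▸ hu), hAsub hu⟩
    · rintro ⟨h1, h2⟩
      by_contra h3
      exact h1 (huniq u h2 h3)
  · ext x
    constructor
    · rintro ⟨hxA, hx⟩
      exact ⟨hx, (hchar x hx).1 hxA v (Finset.mem_sdiff.2 ⟨hv1, hvA⟩)⟩
    · rintro ⟨hx, hxv⟩
      refine ⟨(hchar x hx).2 fun i hi => ?_, hx⟩
      rw [Finset.mem_sdiff] at hi
      rw [huniq i hi.1 hi.2]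
      exact hxv
end

section
/- Let G be a connected bipartite finite simple graph on vertex set V = {v_1,...,v_n} with bipartition (V_1, V_2), and let F be a facet of the edge cone R+A. If F = H_A ∩ R+A = H_B ∩ R+A with A a proper subset of V_1 and B a proper subset of V_1, then A = B. -/
open Finset

/-- The linear functional `x ↦ ∑_{N(A)} x - ∑_A x`. -/
noncomputable def phiFun {n : ℕ} (G : SimpleGraph (Fin n)) [DecidableRel G.Adj]
    (A : Finset (Fin n)) : (Fin n → ℝ) →ₗ[ℝ] ℝ :=
  (∑ i ∈ nbr G A, LinearMap.proj i) - ∑ i ∈ A, LinearMap.proj i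

lemma phiFun_apply {n : ℕ} (G : SimpleGraph (Fin n)) [DecidableRel G.Adj]
    (A : Finset (Fin n)) (x : Fin n → ℝ) :
    phiFun G A x = ∑ i ∈ nbr G A, x i - ∑ i ∈ A, x i := by
  simp [phiFun]

/-- Coefficient of `phiFun`. -/
noncomputable def coefFun {n : ℕ} (G : SimpleGraph (Fin n)) [DecidableRel G.Adj]
    (A : Finset (Fin n)) (k : Fin n) : ℝ :=
  (if k ∈ nbr G A then 1 else 0) - (if k ∈ A then 1 else 0)

lemma phiFun_edge {n : ℕ} (G : SimpleGraph (Fin n)) [DecidableRel G.Adj]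
    (A : Finset (Fin n)) (u v : Fin n) :
    phiFun G A (edgeVector u v) = coefFun G A u + coefFun G A v := by
  simp only [phiFun_apply, edgeVector, coefFun, Finset.sum_add_distrib, Finset.sum_ite_eq']
  ring

lemma phiFun_edge_nonneg {n : ℕ} (G : SimpleGraph (Fin n)) [DecidableRel G.Adj]
    (A : Finset (Fin n)) (u v : Fin n) (h : G.Adj u v) :
    0 ≤ phiFun G A (edgeVector u v) := by
  rw [phiFun_edge]
  have h1 : u ∈ A → v ∈ nbr G A := fun hu => by
    simp only [nbr, Finset.mem_filter, Finset.mem_univ, true_and]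
    exact ⟨u, hu, h.symm⟩
  have h2 : v ∈ A → u ∈ nbr G A := fun hu => by
    simp only [nbr, Finset.mem_filter, Finset.mem_univ, true_and]
    exact ⟨v, hu, h⟩
  unfold coefFun
  by_cases a : u ∈ A <;> by_cases b : v ∈ A <;> simp only [a, b, h1, h2, if_true, if_false] <;>
    (try split_ifs) <;> norm_num

lemma edge_mem_cone {n : ℕ} (G : SimpleGraph (Fin n)) (u v : Fin n) (h : G.Adj u v) :
    edgeVector u v ∈ edgeCone G := by
  refine ⟨fun i j => if i = u then (if j = v then 1 else 0) else 0, ?_, ?_, ?_⟩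
  · intro i j
    dsimp only
    split_ifs <;> norm_num
  · intro i j hij
    dsimp only
    split_ifs with h1 h2
    · subst h1; subst h2; exact absurd h hij
    · rfl
    · rfl
  · rw [Finset.sum_eq_single u, Finset.sum_eq_single v]
    · simp
    · intro b _ hb; simp [hb]
    · simp
    · intro b _ hb; simp [hb]
    · simp

lemma vanish_cone {n : ℕ} (G : SimpleGraph (Fin n)) (L : (Fin n → ℝ) →ₗ[ℝ] ℝ)
    (hL : ∀ u v, G.Adj u v → L (edgeVector u v) = 0) (x : Fin n → ℝ) (hx : x ∈ edgeCone G) :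
    L x = 0 := by
  obtain ⟨c, -, h0, rfl⟩ := hx
  simp only [map_sum, map_smul]
  refine Finset.sum_eq_zero fun i _ => Finset.sum_eq_zero fun j _ => ?_
  by_cases h : G.Adj i j
  · simp [hL i j h]
  · simp [h0 i j h]

lemma const_of_adj {n : ℕ} (G : SimpleGraph (Fin n)) (hG : G.Connected) {α : Type*}
    (s : Fin n → α) (h : ∀ u v, G.Adj u v → s u = s v) (x y : Fin n) : s x = s y := by
  obtain ⟨p⟩ := hG.preconnected x y
  induction p with
  | nil => rfl
  | cons hadj _ ih => exact (h _ _ hadj).trans ih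

/-- If the functional of `A` vanishes on all edges there are no edges. -/
lemma no_edges {n : ℕ} (G : SimpleGraph (Fin n)) [DecidableRel G.Adj]
    (F : Set (Fin n → ℝ)) (hF : IsFacet (edgeCone G) F) (A : Finset (Fin n))
    (hFA : F = {x : Fin n → ℝ | ∑ i ∈ A, x i = ∑ i ∈ nbr G A, x i} ∩ edgeCone G)
    (hv : ∀ u v, G.Adj u v → phiFun G A (edgeVector u v) = 0) (u v : Fin n) :
    ¬ G.Adj u v := by
  intro huv
  have hFQ : F = edgeCone G := by
    rw [hFA]
    refine Set.inter_eq_right.2 fun x hx => ?_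
    have := vanish_cone G _ hv x hx
    rw [phiFun_apply] at this
    simp only [Set.mem_ofPred_eq]
    linarith
  have h2 := hF.2
  rw [hFQ] at h2
  have h3 : Module.finrank ℝ (Submodule.span ℝ (edgeCone G)) = 0 := by omega
  rw [Submodule.finrank_eq_zero] at h3
  have h4 : edgeVector u v ∈ Submodule.span ℝ (edgeCone G) :=
    Submodule.subset_span (edge_mem_cone G u v huv)
  rw [h3, Submodule.mem_bot] at h4
  have h5 := congrFun h4 u
  simp only [edgeVector, if_true, Pi.zero_apply] at h5
  split_ifs at h5 <;> norm_num at h5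

/-- For a connected bipartite graph `G` with bipartition `(V₁, V₂)`: if a facet `F` of
the edge cone satisfies `F = H_A ∩ ℝ₊𝒜 = H_B ∩ ℝ₊𝒜` with `A ⊊ V₁` and `B ⊊ V₁`,
then `A = B`. -/
theorem stmt13 {n : ℕ} (G : SimpleGraph (Fin n)) [DecidableRel G.Adj]
    (hG : G.Connected)
    (V₁ V₂ : Finset (Fin n)) (hdisj : Disjoint V₁ V₂)
    (hunion : V₁ ∪ V₂ = Finset.univ)
    (hbip : ∀ i j, G.Adj i j → (i ∈ V₁ ∧ j ∈ V₂) ∨ (i ∈ V₂ ∧ j ∈ V₁))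
    (F : Set (Fin n → ℝ)) (hF : IsFacet (edgeCone G) F)
    (A B : Finset (Fin n)) (hAsub : A ⊆ V₁) (hAne : A ≠ V₁)
    (hBsub : B ⊆ V₁) (hBne : B ≠ V₁)
    (hFA : F = {x : Fin n → ℝ | ∑ i ∈ A, x i = ∑ i ∈ nbr G A, x i} ∩ edgeCone G)
    (hFB : F = {x : Fin n → ℝ | ∑ i ∈ B, x i = ∑ i ∈ nbr G B, x i} ∩ edgeCone G) :
    A = B := by
  by_cases hE : ∀ u v, ¬ G.Adj u v
  · have hc : ∀ x y : Fin n, x = y :=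
      const_of_adj G hG id (fun u v h => absurd h (hE u v))
    have key : ∀ C : Finset (Fin n), C ⊆ V₁ → C ≠ V₁ → C = ∅ := by
      intro C hC hne
      by_contra hemp
      obtain ⟨a, ha⟩ := Finset.nonempty_iff_ne_empty.2 hemp
      exact hne (Finset.Subset.antisymm hC fun x _ => hc a x ▸ ha)
    rw [key A hAsub hAne, key B hBsub hBne]
  have hnvA : ¬ ∀ u v, G.Adj u v → phiFun G A (edgeVector u v) = 0 :=
    fun h => hE (no_edges G F hF A hFA h)
  have hnvB : ¬ ∀ u v, G.Adj u v → phiFun G B (edgeVector u v) = 0 :=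
    fun h => hE (no_edges G F hF B hFB h)
  have hker : ∀ C : Finset (Fin n),
      F = {x : Fin n → ℝ | ∑ i ∈ C, x i = ∑ i ∈ nbr G C, x i} ∩ edgeCone G →
      ∀ x ∈ Submodule.span ℝ F, phiFun G C x = 0 := by
    intro C hC x hx
    have : Submodule.span ℝ F ≤ LinearMap.ker (phiFun G C) := by
      refine Submodule.span_le.2 fun y hy => ?_
      rw [hC] at hy
      have h1 := hy.1
      simp only [Set.mem_ofPred_eq] at h1
      simp only [SetLike.mem_coe, LinearMap.mem_ker, phiFun_apply]
      linarith
    exact this hx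
  push Not at hnvB
  obtain ⟨p, q, hpq, hne⟩ := hnvB
  have hBpos : 0 < phiFun G B (edgeVector p q) :=
    lt_of_le_of_ne (phiFun_edge_nonneg G B p q hpq) (Ne.symm hne)
  have hFQ : Submodule.span ℝ F ≤ Submodule.span ℝ (edgeCone G) := by
    refine Submodule.span_mono ?_
    rw [hFA]
    exact Set.inter_subset_right
  have hqQ : edgeVector p q ∈ Submodule.span ℝ (edgeCone G) :=
    Submodule.subset_span (edge_mem_cone G p q hpq)
  have hqF : edgeVector p q ∉ Submodule.span ℝ F := fun h => hne (hker B hFB _ h)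
  have hsup : Submodule.span ℝ F ⊔ Submodule.span ℝ {edgeVector p q}
      = Submodule.span ℝ (edgeCone G) := by
    apply Submodule.eq_of_le_of_finrank_le
    · exact sup_le hFQ (by simpa using hqQ)
    · have hlt : Submodule.span ℝ F < Submodule.span ℝ F ⊔ Submodule.span ℝ {edgeVector p q} := by
        refine lt_of_le_of_ne le_sup_left fun h => hqF ?_
        rw [h]
        exact Submodule.mem_sup_right (Submodule.mem_span_singleton_self _)
      have := Submodule.finrank_lt_finrank_of_lt hlt
      have := hF.2
      omega
  obtain ⟨c, hc⟩ : ∃ c, c = phiFun G A (edgeVector p q) / phiFun G B (edgeVector p q) := ⟨_, rfl⟩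
  have hcnn : 0 ≤ c := hc ▸ div_nonneg (phiFun_edge_nonneg G A p q hpq) hBpos.le
  have hedge : ∀ u v, G.Adj u v →
      phiFun G A (edgeVector u v) = c * phiFun G B (edgeVector u v) := by
    intro u v huv
    have hm : edgeVector u v ∈ Submodule.span ℝ F ⊔ Submodule.span ℝ {edgeVector p q} := by
      rw [hsup]
      exact Submodule.subset_span (edge_mem_cone G u v huv)
    obtain ⟨y, hy, z, hz, hyz⟩ := Submodule.mem_sup.1 hm
    obtain ⟨t, rfl⟩ := Submodule.mem_span_singleton.1 hz
    rw [← hyz, map_add, map_add, hker A hFA y hy, hker B hFB y hy, map_smul, map_smul, hc]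
    simp only [smul_eq_mul]
    field_simp
    ring
  have hcpos : 0 < c := by
    refine lt_of_le_of_ne hcnn fun h0 => hnvA fun u v huv => ?_
    rw [hedge u v huv, ← h0, zero_mul]
  have hd : ∀ k, k ∈ V₁ → k ∈ V₂ → False := fun k h1 h2 =>
    Finset.disjoint_left.1 hdisj h1 h2
  have hN : ∀ C ⊆ V₁, ∀ k ∈ V₁, coefFun G C k = - (if k ∈ C then 1 else 0) := by
    intro C hC k hk
    have : k ∉ nbr G C := by
      simp only [nbr, Finset.mem_filter, Finset.mem_univ, true_and]
      rintro ⟨a, ha, hadj⟩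
      rcases hbip _ _ hadj with h | h
      · exact hd a (hC ha) h.2
      · exact hd k hk h.1
    simp [coefFun, this]
  have hconst := const_of_adj G hG
    (fun k => if k ∈ V₁ then coefFun G A k - c * coefFun G B k
      else - (coefFun G A k - c * coefFun G B k)) (by
      intro u v huv
      have h := hedge u v huv
      rw [phiFun_edge, phiFun_edge] at h
      rcases hbip _ _ huv with h1 | h1
      · rw [if_pos h1.1, if_neg fun h2 => hd v h2 h1.2]; linarith
      · rw [if_pos h1.2, if_neg fun h2 => hd u h2 h1.1]; linarith)
  have hconst' : ∀ x ∈ V₁, ∀ y ∈ V₁,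
      - (if x ∈ A then (1 : ℝ) else 0) + c * (if x ∈ B then 1 else 0) =
      - (if y ∈ A then (1 : ℝ) else 0) + c * (if y ∈ B then 1 else 0) := by
    intro x hx y hy
    have := hconst x y
    simp only [hx, hy, if_true, hN A hAsub _ hx, hN A hAsub _ hy, hN B hBsub _ hx,
      hN B hBsub _ hy] at this
    linarith
  obtain ⟨x, hx, hxA⟩ := Finset.exists_of_ssubset (Finset.ssubset_iff_subset_ne.2 ⟨hAsub, hAne⟩)
  obtain ⟨y, hy, hyB⟩ := Finset.exists_of_ssubset (Finset.ssubset_iff_subset_ne.2 ⟨hBsub, hBne⟩)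
  have hxy := hconst' x hx y hy
  have hxB : x ∉ B := by
    intro hxB
    simp only [hxA, hyB, hxB, if_true, if_false] at hxy
    split_ifs at hxy <;> linarith
  have hz : ∀ z ∈ V₁, (z ∈ A ↔ z ∈ B) := by
    intro z hz
    have h := hconst' z hz x hx
    simp only [hxA, hxB, if_false] at h
    by_cases a : z ∈ A <;> by_cases b : z ∈ B <;> simp only [a, b, if_true, if_false] at h ⊢ <;>
      linarith
  ext z
  exact ⟨fun h => (hz z (hAsub h)).1 h, fun h => (hz z (hBsub h)).2 h⟩
end

section
/- Let G be a bipartite finite simple graph on vertex set V = {v_1,...,v_n}. Then Z^n ∩ R+A = NA; that is, an integer vector α ∈ Z^n lies in the edge cone of G if and only if α is a linear combination with nonnegative integer coefficients of the edge vectors of G. -/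
open Finset

lemma sum_edgeVector_apply {n : ℕ} (c : Fin n → Fin n → ℝ) (k : Fin n) :
    (∑ i, ∑ j, c i j • edgeVector i j) k = ∑ j, c k j + ∑ j, c j k := by
  simp only [Finset.sum_apply, Pi.smul_apply, edgeVector, smul_eq_mul, mul_add,
    Finset.sum_add_distrib, mul_ite, mul_one, mul_zero]
  congr 1
  · rw [Finset.sum_comm]
    simp
  · simp

lemma card_fiber {n : ℕ} (m : Fin n → ℕ) (A : Finset (Fin n)) :
    #{p : (Σ i, Fin (m i)) | p.1 ∈ A} = ∑ i ∈ A, m i := by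
  have : ({p : (Σ i, Fin (m i)) | p.1 ∈ A} : Finset _) = A.sigma (fun _ => univ) := by
    ext p; simp
  rw [this, Finset.card_sigma]
  simp

lemma exists_perm {n : ℕ} (G : SimpleGraph (Fin n)) (m : Fin n → ℕ)
    (d : Fin n → Fin n → ℝ) (h0 : ∀ i j, 0 ≤ d i j) (hs : ∀ i j, d i j = d j i)
    (hadj : ∀ i j, ¬ G.Adj i j → d i j = 0) (hm : ∀ i, (m i : ℝ) = ∑ j, d i j) :
    ∃ f : (Σ i, Fin (m i)) → (Σ i, Fin (m i)), Function.Bijective f ∧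
      ∀ p, G.Adj p.1 (f p).1 := by
  classical
  let t : (Σ i, Fin (m i)) → Finset (Σ i, Fin (m i)) := fun p => {q | G.Adj p.1 q.1}
  have key : ∀ s : Finset (Σ i, Fin (m i)), #s ≤ #(s.biUnion t) := by
    intro s
    let A : Finset (Fin n) := s.image Sigma.fst
    let B : Finset (Fin n) := {j | ∃ i ∈ A, G.Adj i j}
    have h1 : #s ≤ ∑ i ∈ A, m i := by
      rw [← card_fiber]
      apply Finset.card_le_card
      intro p hp
      simp only [Finset.mem_filter, Finset.mem_univ, true_and]
      exact Finset.mem_image_of_mem _ hp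
    have h2 : #(s.biUnion t) = ∑ j ∈ B, m j := by
      rw [← card_fiber]
      congr 1
      ext q
      simp only [t, A, B, Finset.mem_biUnion, Finset.mem_filter, Finset.mem_univ, true_and,
        Finset.mem_image]
      constructor
      · rintro ⟨p, hp, h⟩
        exact ⟨p.1, ⟨p, hp, rfl⟩, h⟩
      · rintro ⟨_, ⟨p, hp, rfl⟩, h⟩
        exact ⟨p, hp, h⟩
    have h3 : ((∑ i ∈ A, m i : ℕ) : ℝ) ≤ ((∑ j ∈ B, m j : ℕ) : ℝ) := by
      push_cast
      calc ∑ i ∈ A, (m i : ℝ) = ∑ i ∈ A, ∑ j ∈ B, d i j := by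
            refine Finset.sum_congr rfl fun i hi => ?_
            rw [hm]
            symm
            apply Finset.sum_subset (Finset.subset_univ _)
            intro j _ hj
            apply hadj
            intro h
            exact hj (by simp only [B, Finset.mem_filter, Finset.mem_univ, true_and]; exact ⟨i, hi, h⟩)
        _ = ∑ j ∈ B, ∑ i ∈ A, d j i := by
            rw [Finset.sum_comm]
            exact Finset.sum_congr rfl fun j _ => Finset.sum_congr rfl fun i _ => hs _ _
        _ ≤ ∑ j ∈ B, (m j : ℝ) := by
            refine Finset.sum_le_sum fun j _ => ?_
            rw [hm]
            exact Finset.sum_le_sum_of_subset_of_nonneg (Finset.subset_univ _)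
              fun i _ _ => h0 _ _
    rw [h2]
    exact h1.trans (by exact_mod_cast h3)
  obtain ⟨f, hf, hft⟩ := (Finset.all_card_le_biUnion_card_iff_exists_injective t).1 key
  refine ⟨f, Finite.injective_iff_bijective.1 hf, fun p => ?_⟩
  have := hft p
  simpa [t] using this

/-- For a bipartite graph `G`, `ℤⁿ ∩ ℝ₊𝒜 = ℕ𝒜`: an integer vector lies in the edge
cone if and only if it is a nonnegative integer combination of the edge vectors. -/
theorem stmt15 {n : ℕ} (G : SimpleGraph (Fin n))
    (hbip : ∃ U : Set (Fin n), ∀ i j, G.Adj i j → (i ∈ U ↔ j ∉ U))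
    (x : Fin n → ℝ) :
    (x ∈ edgeCone G ∧ ∀ i, ∃ z : ℤ, x i = (z : ℝ)) ↔
    ∃ c : Fin n → Fin n → ℕ, (∀ i j, ¬ G.Adj i j → c i j = 0) ∧
      x = ∑ i, ∑ j, (c i j : ℝ) • edgeVector i j := by
  classical
  constructor
  · rintro ⟨⟨c, hc0, hcadj, hx⟩, hz⟩
    obtain ⟨U, hU⟩ := hbip
    have hxk : ∀ k, x k = ∑ j, (c k j + c j k) := by
      intro k
      rw [hx, sum_edgeVector_apply, Finset.sum_add_distrib]
    have hnat : ∀ k, ∃ m : ℕ, (m : ℝ) = x k := by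
      intro k
      obtain ⟨z, hz⟩ := hz k
      have hnn : 0 ≤ x k := by
        rw [hxk]
        exact Finset.sum_nonneg fun j _ => add_nonneg (hc0 _ _) (hc0 _ _)
      have hz0 : 0 ≤ z := by
        rw [hz] at hnn
        exact_mod_cast hnn
      lift z to ℕ using hz0
      exact ⟨z, by rw [hz]; simp⟩
    choose m hm using hnat
    obtain ⟨f, hf, hfadj⟩ := exists_perm G m (fun i j => c i j + c j i)
      (fun i j => add_nonneg (hc0 _ _) (hc0 _ _)) (fun i j => add_comm _ _)
      (fun i j h => by
        show c i j + c j i = 0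
        rw [hcadj i j h, hcadj j i (fun h' => h h'.symm), add_zero])
      (fun i => by rw [hm, hxk])
    refine ⟨fun i j => #{p : (Σ i, Fin (m i)) | (p.1 = i ∧ p.1 ∈ U) ∧ (f p).1 = j}, ?_, ?_⟩
    · intro i j h
      rw [Finset.card_eq_zero, Finset.filter_eq_empty_iff]
      rintro p _ ⟨⟨rfl, _⟩, rfl⟩
      exact h (hfadj p)
    · funext k
      rw [sum_edgeVector_apply, ← hm]
      have e1 : ∑ j, #{p : (Σ i, Fin (m i)) | (p.1 = k ∧ p.1 ∈ U) ∧ (f p).1 = j}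
          = #{p : (Σ i, Fin (m i)) | p.1 = k ∧ p.1 ∈ U} := by
        rw [Finset.card_eq_sum_card_fiberwise (f := fun p => (f p).1) (t := univ)
          (fun _ _ => by simp)]
        simp only [Finset.filter_filter]
      have e2 : ∑ j, #{p : (Σ i, Fin (m i)) | (p.1 = j ∧ p.1 ∈ U) ∧ (f p).1 = k}
          = #{p : (Σ i, Fin (m i)) | p.1 ∈ U ∧ (f p).1 = k} := by
        rw [Finset.card_eq_sum_card_fiberwise (f := fun p => p.1) (t := univ)
          (fun _ _ => by simp)]
        simp only [Finset.filter_filter]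
        refine Finset.sum_congr rfl fun j _ => ?_
        congr 1
        ext p
        simp only [Finset.mem_filter]
        tauto
      have hk : #{p : (Σ i, Fin (m i)) | p.1 = k} = m k := by
        have := card_fiber m {k}
        simpa using this
      have main : m k = #{p : (Σ i, Fin (m i)) | p.1 = k ∧ p.1 ∈ U}
          + #{p : (Σ i, Fin (m i)) | p.1 ∈ U ∧ (f p).1 = k} := by
        by_cases hkU : k ∈ U
        · have a1 : #{p : (Σ i, Fin (m i)) | p.1 ∈ U ∧ (f p).1 = k} = 0 := by
            rw [Finset.card_eq_zero, Finset.filter_eq_empty_iff]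
            rintro p _ ⟨hp, rfl⟩
            exact (hU _ _ (hfadj p)).1 hp hkU
          rw [a1, add_zero, ← hk]
          congr 1
          ext p
          simp only [Finset.mem_filter, Finset.mem_univ, true_and]
          constructor
          · intro h
            exact ⟨h, h ▸ hkU⟩
          · exact fun h => h.1
        · have a1 : #{p : (Σ i, Fin (m i)) | p.1 = k ∧ p.1 ∈ U} = 0 := by
            rw [Finset.card_eq_zero, Finset.filter_eq_empty_iff]
            rintro p _ ⟨rfl, hp⟩
            exact hkU hp
          rw [a1, zero_add, ← hk]
          symm
          refine Finset.card_bij (fun p _ => f p) ?_ (fun _ _ _ _ h => hf.1 h) ?_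
          · intro p hp
            simp only [Finset.mem_filter, Finset.mem_univ, true_and] at hp ⊢
            exact hp.2
          · intro q hq
            simp only [Finset.mem_filter, Finset.mem_univ, true_and] at hq
            obtain ⟨p, rfl⟩ := hf.2 q
            refine ⟨p, ?_, rfl⟩
            simp only [Finset.mem_filter, Finset.mem_univ, true_and]
            exact ⟨(hU _ _ (hfadj p)).2 (hq ▸ hkU), hq⟩
      rw [← e1, ← e2] at main
      exact_mod_cast main
  · rintro ⟨c, hc, hx⟩
    refine ⟨⟨fun i j => c i j, fun i j => Nat.cast_nonneg _, fun i j h => by simp [hc i j h], hx⟩,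
      fun k => ⟨∑ j, (c k j : ℤ) + ∑ j, (c j k : ℤ), ?_⟩⟩
    rw [hx, sum_edgeVector_apply (fun i j => (c i j : ℝ))]
    push_cast
    rfl
end
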